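/- arXiv:1311.1723 — 5 statements merged into one kernel-verified Lean document; each statement's English description precedes it below -/
import Mathlib

section
/- For any realization of Algorithm RFD on an input sequence of length n, the content t of the total counter at the end of the k-th call to Update (for k ≥ 0, where k = 0 denotes the situation immediately after initialization) satisfies: t ≤ d + N + c·d·L if a rescale takes place in step k, and t ≤ T otherwise; moreover d + N + c·d·L ≤ T. -/
open Finset

/-- One call to `Update`: if the total would exceed `T`, rescale first
(replace each count `s i` by `max 1 ⌊cf * s i⌋`), then add `d` to the count of `x`. -/
noncomputable def RFDupdate {N : ℕ} (cf : ℝ) (d T : ℕ) (s : Fin N → ℕ) (x : Fin N) : Fin N → ℕ :=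
  let s' : Fin N → ℕ :=
    if T < (∑ i, s i) + d then (fun i => max 1 ⌊cf * (s i : ℝ)⌋₊) else s
  fun i => if i = x then s' i + d else s' i

/-- State (counts) of Algorithm RFD after `k` update steps on the input sequence `xs`
(0-indexed: the `k`-th step processes symbol `xs (k-1)`). -/
noncomputable def RFDcounts {N : ℕ} (cf : ℝ) (d T : ℕ) (s0 : Fin N → ℕ) (xs : ℕ → Fin N) : ℕ → Fin N → ℕ
  | 0 => s0
  | k + 1 => RFDupdate cf d T (RFDcounts cf d T s0 xs k) (xs k)

/-- Total counter `t` after `k` update steps. -/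
noncomputable def RFDtotal {N : ℕ} (cf : ℝ) (d T : ℕ) (s0 : Fin N → ℕ) (xs : ℕ → Fin N) (k : ℕ) : ℕ :=
  ∑ i, RFDcounts cf d T s0 xs k i

/-- A rescale takes place in step `k ≥ 1` iff at the beginning of step `k`
the total plus `d` exceeds `T`. -/
def RFDrescaleAt {N : ℕ} (cf : ℝ) (d T : ℕ) (s0 : Fin N → ℕ) (xs : ℕ → Fin N) (k : ℕ) : Prop :=
  1 ≤ k ∧ T < RFDtotal cf d T s0 xs (k - 1) + d

/-- `P` is a partition of the integer interval `[a,b]` into consecutive closed intervals,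
listed in order; an interval `[i,j]` is represented by the pair `(i,j)`. -/
def ConsecPartition (a b : ℕ) (P : List (ℕ × ℕ)) : Prop :=
  P ≠ [] ∧ P.head?.map Prod.fst = some a ∧ P.getLast?.map Prod.snd = some b ∧
    (∀ p ∈ P, p.1 ≤ p.2) ∧ P.Chain' (fun p q => q.1 = p.2 + 1)

/-- `P` is the rescale partition of `[a,b]`: a partition into consecutive intervals `[i,j]`
such that no rescale occurs at steps `i,…,j-1`, and a rescale occurs at step `j` whenever
`j < b` (for the last interval, a rescale at its last step is optional). -/
def RFDrescalePartition {N : ℕ} (cf : ℝ) (d T : ℕ) (s0 : Fin N → ℕ) (xs : ℕ → Fin N)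
    (a b : ℕ) (P : List (ℕ × ℕ)) : Prop :=
  ConsecPartition a b P ∧
    (∀ p ∈ P, ∀ k, p.1 ≤ k → k < p.2 → ¬ RFDrescaleAt cf d T s0 xs k) ∧
    (∀ p ∈ P, p.2 < b → RFDrescaleAt cf d T s0 xs p.2)

/-- The probability `RFD(x; x^k)` that Algorithm RFD assigns to symbol `x` after `k` steps. -/
noncomputable def RFDprob {N : ℕ} (cf : ℝ) (d T : ℕ) (s0 : Fin N → ℕ) (xs : ℕ → Fin N)
    (k : ℕ) (x : Fin N) : ℝ :=
  (RFDcounts cf d T s0 xs k x : ℝ) / (RFDtotal cf d T s0 xs k : ℝ)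

/-- Ideal code length (in bits) of Algorithm RFD on steps `a,…,b` (1-indexed steps;
step `k` encodes symbol `xs (k-1)` using the prediction after `k-1` steps). -/
noncomputable def RFDcodeLen {N : ℕ} (cf : ℝ) (d T : ℕ) (s0 : Fin N → ℕ) (xs : ℕ → Fin N)
    (a b : ℕ) : ℝ :=
  -∑ k ∈ Finset.Icc a b, Real.logb 2 (RFDprob cf d T s0 xs (k - 1) (xs (k - 1)))

/-- Ideal code length (in bits) of a fixed distribution `p` on steps `a,…,b`. -/
noncomputable def distCodeLen {N : ℕ} (p : Fin N → ℝ) (xs : ℕ → Fin N) (a b : ℕ) : ℝ :=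
  -∑ k ∈ Finset.Icc a b, Real.logb 2 (p (xs (k - 1)))

/-!
A rescale moves each count towards `1`, its least possible value, multiplying the excess by a
factor of at most `cf`: `max 1 ⌊cf * s⌋ ≤ 1 + cf * (s - 1)`. Summing over the alphabet, it takes
the total from `t` to at most `N + cf * (t - N)`. As long as `t ≤ T`, the total after a rescaling
step is therefore at most `d + N + cf * (T - N)`. The condition `d ≤ (1 - cf) * (T - N)` says
exactly that this value does not exceed `T`, so the invariant `t ≤ T` survives every step.
-/

section Rescale

variable {ι : Type*} {c : ℝ} {s : ι → ℕ}

/-- The counts obtained from `s` by a rescale with factor `c`: scale, round down, and replace `0`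
by `1`. The rounding uses the floor into `ℕ`, which is `0` when `c * s i` is negative. -/
noncomputable def rescaleCounts (c : ℝ) (s : ι → ℕ) : ι → ℕ :=
  fun i => max 1 ⌊c * (s i : ℝ)⌋₊

theorem one_le_rescaleCounts (c : ℝ) (s : ι → ℕ) (i : ι) : 1 ≤ rescaleCounts c s i :=
  le_max_left _ _

theorem rescaleCounts_le (hc0 : 0 ≤ c) (hc1 : c ≤ 1) {i : ι} (hs : 1 ≤ s i) :
    (rescaleCounts c s i : ℝ) ≤ 1 + c * ((s i : ℝ) - 1) := by
  have excess_nonneg : (0 : ℝ) ≤ s i - 1 := sub_nonneg.2 (mod_cast hs)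
  rw [rescaleCounts, Nat.cast_max, Nat.cast_one]
  refine max_le (le_add_of_nonneg_right (mul_nonneg hc0 excess_nonneg)) ?_
  calc (⌊c * (s i : ℝ)⌋₊ : ℝ)
      ≤ c * s i := Nat.floor_le (by positivity)
    _ ≤ 1 + c * ((s i : ℝ) - 1) := by linarith

theorem sum_rescaleCounts_le [Fintype ι] (hc0 : 0 ≤ c) (hc1 : c ≤ 1) (hs : ∀ i, 1 ≤ s i) :
    ((∑ i, rescaleCounts c s i : ℕ) : ℝ) ≤
      Fintype.card ι + c * (((∑ i, s i : ℕ) : ℝ) - Fintype.card ι) :=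
  calc ((∑ i, rescaleCounts c s i : ℕ) : ℝ)
      = ∑ i, (rescaleCounts c s i : ℝ) := Nat.cast_sum _ _
    _ ≤ ∑ i, (1 + c * ((s i : ℝ) - 1)) := sum_le_sum fun i _ => rescaleCounts_le hc0 hc1 (hs i)
    _ = Fintype.card ι + c * (((∑ i, s i : ℕ) : ℝ) - Fintype.card ι) := by
      simp [sum_add_distrib, ← mul_sum]

end Rescale

theorem sum_add_pi_single {ι M : Type*} [Fintype ι] [DecidableEq ι] [AddCommMonoid M]
    (f : ι → M) (i : ι) (a : M) : ∑ j, (f + Pi.single i a : ι → M) j = ∑ j, f j + a := by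
  simp only [Pi.add_apply, sum_add_distrib, Fintype.sum_pi_single']

section Update

variable {N d T : ℕ} {cf : ℝ} {s : Fin N → ℕ}

theorem RFDupdate_eq_add_single (cf : ℝ) (d T : ℕ) (s : Fin N → ℕ) (x : Fin N) :
    RFDupdate cf d T s x =
      (if T < ∑ i, s i + d then rescaleCounts cf s else s) + Pi.single x d := by
  ext i
  unfold rescaleCounts
  by_cases hi : i = x <;> simp [RFDupdate, hi]

theorem one_le_RFDupdate (cf : ℝ) (d T : ℕ) (hs : ∀ i, 1 ≤ s i) (x i : Fin N) :
    1 ≤ RFDupdate cf d T s x i := by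
  rw [RFDupdate_eq_add_single]
  apply le_add_right
  split_ifs
  · exact one_le_rescaleCounts cf s i
  · exact hs i

theorem sum_RFDupdate_of_le (cf : ℝ) (h : ∑ i, s i + d ≤ T) (x : Fin N) :
    ∑ i, RFDupdate cf d T s x i = ∑ i, s i + d := by
  rw [RFDupdate_eq_add_single, if_neg h.not_gt, sum_add_pi_single]

theorem sum_RFDupdate_le_of_lt (hc0 : 0 ≤ cf) (hc1 : cf ≤ 1) (hs : ∀ i, 1 ≤ s i)
    (h : T < ∑ i, s i + d) (x : Fin N) :
    ((∑ i, RFDupdate cf d T s x i : ℕ) : ℝ) ≤ d + N + cf * (((∑ i, s i : ℕ) : ℝ) - N) := by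
  have rescaled_le := sum_rescaleCounts_le hc0 hc1 hs
  rw [Fintype.card_fin] at rescaled_le
  rw [RFDupdate_eq_add_single, if_pos h, sum_add_pi_single, Nat.cast_add]
  linarith

end Update

section Run

variable {N d T : ℕ} {cf : ℝ} {s0 : Fin N → ℕ} {xs : ℕ → Fin N}

theorem one_le_RFDcounts (cf : ℝ) (d T : ℕ) (hs0 : ∀ i, 1 ≤ s0 i) (xs : ℕ → Fin N) (k : ℕ) :
    ∀ i, 1 ≤ RFDcounts cf d T s0 xs k i := by
  induction k with
  | zero => exact hs0
  | succ k ih => exact one_le_RFDupdate cf d T ih (xs k)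

theorem RFDrescaleAt_succ {k : ℕ} :
    RFDrescaleAt cf d T s0 xs (k + 1) ↔ T < RFDtotal cf d T s0 xs k + d :=
  and_iff_right (Nat.le_add_left 1 k)

theorem RFDtotal_succ_of_not_rescaleAt {k : ℕ} (h : ¬ RFDrescaleAt cf d T s0 xs (k + 1)) :
    RFDtotal cf d T s0 xs (k + 1) = RFDtotal cf d T s0 xs k + d :=
  sum_RFDupdate_of_le cf (not_lt.1 (mt RFDrescaleAt_succ.2 h)) (xs k)

theorem RFDtotal_succ_le_of_rescaleAt (hc0 : 0 ≤ cf) (hc1 : cf ≤ 1) (hs0 : ∀ i, 1 ≤ s0 i) {k : ℕ}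
    (h : RFDrescaleAt cf d T s0 xs (k + 1)) :
    (RFDtotal cf d T s0 xs (k + 1) : ℝ) ≤ d + N + cf * ((RFDtotal cf d T s0 xs k : ℝ) - N) :=
  sum_RFDupdate_le_of_lt hc0 hc1 (one_le_RFDcounts cf d T hs0 xs k) (RFDrescaleAt_succ.1 h) (xs k)

theorem RFDtotal_le (hc0 : 0 ≤ cf) (hc1 : cf ≤ 1) (hT : (d : ℝ) ≤ (1 - cf) * ((T : ℝ) - N))
    (hs0 : ∀ i, 1 ≤ s0 i) (hsum : ∑ i, s0 i ≤ T) (k : ℕ) :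
    RFDtotal cf d T s0 xs k ≤ T := by
  induction k with
  | zero => exact hsum
  | succ k ih =>
    by_cases h : RFDrescaleAt cf d T s0 xs (k + 1)
    · suffices (RFDtotal cf d T s0 xs (k + 1) : ℝ) ≤ T from mod_cast this
      calc (RFDtotal cf d T s0 xs (k + 1) : ℝ)
          ≤ d + N + cf * ((RFDtotal cf d T s0 xs k : ℝ) - N) :=
            RFDtotal_succ_le_of_rescaleAt hc0 hc1 hs0 h
        _ ≤ d + N + cf * ((T : ℝ) - N) := by gcongr
        _ ≤ T := by linarith
    · rw [RFDtotal_succ_of_not_rescaleAt h]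
      exact not_lt.1 (mt RFDrescaleAt_succ.2 h)

theorem RFDtotal_le_of_rescaleAt (hc0 : 0 ≤ cf) (hc1 : cf ≤ 1)
    (hT : (d : ℝ) ≤ (1 - cf) * ((T : ℝ) - N)) (hs0 : ∀ i, 1 ≤ s0 i) (hsum : ∑ i, s0 i ≤ T)
    {k : ℕ} (h : RFDrescaleAt cf d T s0 xs k) :
    (RFDtotal cf d T s0 xs k : ℝ) ≤ d + N + cf * ((T : ℝ) - N) := by
  obtain ⟨m, rfl⟩ := Nat.exists_eq_add_of_le' h.1
  calc (RFDtotal cf d T s0 xs (m + 1) : ℝ)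
      ≤ d + N + cf * ((RFDtotal cf d T s0 xs m : ℝ) - N) :=
        RFDtotal_succ_le_of_rescaleAt hc0 hc1 hs0 h
    _ ≤ d + N + cf * ((T : ℝ) - N) := by
      gcongr
      exact RFDtotal_le hc0 hc1 hT hs0 hsum m

end Run

/-- Lemma 1: the total counter `t` at the end of the `k`-th call to
`Update` (for `k = 0`: right after `Init`) satisfies `t ≤ d + N + c·d·L` if a rescale
takes place in step `k`, and `t ≤ T` otherwise; moreover `d + N + c·d·L ≤ T`,
where `L = (T - N)/d`. -/
theorem stmt0 (N d T : ℕ) (cf : ℝ) (hN : 1 < N)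
    (s0 : Fin N → ℕ) (xs : ℕ → Fin N)
    (hd : 1 ≤ d) (hc0 : 0 ≤ cf) (hc1 : cf < 1)
    (hT : (d : ℝ) ≤ (1 - cf) * ((T : ℝ) - N))
    (hs0 : ∀ x, 1 ≤ s0 x) (hsum : ∑ x, s0 x ≤ T)
    (k : ℕ) :
    ((d : ℝ) + N + cf * d * (((T : ℝ) - N) / d) ≤ T) ∧
    (RFDrescaleAt cf d T s0 xs k →
      (RFDtotal cf d T s0 xs k : ℝ) ≤ (d : ℝ) + N + cf * d * (((T : ℝ) - N) / d)) ∧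
    (¬ RFDrescaleAt cf d T s0 xs k →
      (RFDtotal cf d T s0 xs k : ℝ) ≤ (T : ℝ)) := by
  have hd0 : (d : ℝ) ≠ 0 := by positivity
  rw [mul_assoc, mul_div_cancel₀ _ hd0]
  refine ⟨by linarith, RFDtotal_le_of_rescaleAt hc0 hc1.le hT hs0 hsum, fun _ => ?_⟩
  exact_mod_cast RFDtotal_le hc0 hc1.le hT hs0 hsum k
end

section
/- Let a > 0 be real, let c(1),…,c(M) be positive integers (M ≥ 1) with Σ_{x=1}^M c(x) = n. For a sequence x^n over {1,…,M} in which symbol x occurs exactly c(x) times, define s(x; x^k) := a + |{1 ≤ i ≤ k : x_i = x}|. Then ∏_{k=1}^n s(x_k; x^{k−1}) ≥ (a·M/n)^M · ∏_{x=1}^M c(x)! · ∏_{k=1}^{n−M} (a+k)/k. -/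
open Finset

/-!
Grouping the positions by symbol, a symbol with `c` occurrences contributes
`a (a + 1) ⋯ (a + c - 1) = (a / c) * c! * C(a + c - 1, c - 1)`. The factors `a / c` are bounded
below by AM-GM, and `m ↦ C(a + m, m) = ∏_{k ≤ m} (1 + a / k)` is submultiplicative because its
factors decrease in `k`.
-/

section Occurrences

variable {R : Type*} [CommMonoid R]

lemma prod_filter_range_count (p : ℕ → Prop) [DecidablePred p] (f : ℕ → R) (n : ℕ) :
    ∏ k ∈ range n with p k, f (Nat.count p k) = ∏ j ∈ range (Nat.count p n), f j := by
  simp only [prod_filter]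
  induction n with
  | zero => simp
  | succ n ih =>
    rw [prod_range_succ, ih, Nat.count_succ]
    split_ifs
    · rw [prod_range_succ]
    · rw [mul_one, add_zero]

lemma prod_range_count_eq_prod_image {α : Type*} [DecidableEq α] (xs : ℕ → α) (f : ℕ → R) (n : ℕ) :
    ∏ k ∈ range n, f (Nat.count (xs · = xs k) k) =
      ∏ x ∈ (range n).image xs, ∏ j ∈ range (Nat.count (xs · = x) n), f j := by
  rw [← prod_fiberwise_of_maps_to fun _ ↦ mem_image_of_mem xs]
  refine prod_congr rfl fun x _ ↦ ?_
  rw [← prod_filter_range_count]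
  refine prod_congr rfl fun k hk ↦ ?_
  rw [(mem_filter.mp hk).2]

end Occurrences

section AddChoose

variable {K : Type*} [Field K]

/-- The generalized binomial coefficient `C(a + m, m)` for an element `a` of a field, as the
product of the ratios `(a + k) / k` over `1 ≤ k ≤ m`. -/
def addChoose (a : K) (m : ℕ) : K :=
  ∏ k ∈ Icc 1 m, (a + k) / (k : K)

@[simp]
lemma addChoose_zero (a : K) : addChoose a 0 = 1 := by
  simp [addChoose]

lemma addChoose_succ (a : K) (m : ℕ) :
    addChoose a (m + 1) = addChoose a m * ((a + (m + 1 : ℕ)) / (m + 1 : ℕ)) :=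
  prod_Icc_succ_top (by lia) _

lemma prod_range_succ_add_natCast [CharZero K] (a : K) (m : ℕ) :
    ∏ j ∈ range (m + 1), (a + j) =
      a / (m + 1 : ℕ) * (m + 1).factorial * addChoose a m := by
  induction m with
  | zero => simp
  | succ m ih =>
    rw [prod_range_succ, ih, addChoose_succ, Nat.factorial_succ (m + 1)]
    have hm : ((m + 1 + 1 : ℕ) : K) ≠ 0 := Nat.cast_ne_zero.mpr (m + 1).succ_ne_zero
    push_cast at hm ⊢
    field_simp

variable [LinearOrder K] [IsStrictOrderedRing K] {a : K}

lemma addChoose_nonneg (ha : 0 ≤ a) (m : ℕ) : 0 ≤ addChoose a m :=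
  prod_nonneg fun _ _ ↦ by positivity

lemma addChoose_add_le_mul (ha : 0 ≤ a) (m l : ℕ) :
    addChoose a (m + l) ≤ addChoose a m * addChoose a l := by
  induction l with
  | zero => simp
  | succ l ih =>
    have hratio : (a + (m + l + 1 : ℕ)) / (m + l + 1 : ℕ) ≤ (a + (l + 1 : ℕ)) / (l + 1 : ℕ) := by
      rw [add_div, add_div, div_self (by positivity), div_self (by positivity)]
      gcongr
      lia
    rw [← add_assoc, addChoose_succ, addChoose_succ, ← mul_assoc]
    exact mul_le_mul ih hratio (by positivity)
      (mul_nonneg (addChoose_nonneg ha m) (addChoose_nonneg ha l))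

lemma addChoose_sum_le_prod {ι : Type*} (ha : 0 ≤ a) (s : Finset ι) (m : ι → ℕ) :
    addChoose a (∑ x ∈ s, m x) ≤ ∏ x ∈ s, addChoose a (m x) := by
  classical
  induction s using Finset.induction_on with
  | empty => simp
  | insert x s hx ih =>
    rw [sum_insert hx, prod_insert hx]
    exact (addChoose_add_le_mul ha _ _).trans
      (mul_le_mul_of_nonneg_left ih (addChoose_nonneg ha _))

end AddChoose

section PositiveCounts

variable {ι : Type*} (s : Finset ι)

lemma card_pow_card_mul_prod_le_sum_pow_card {z : ι → ℝ} (hz : ∀ x ∈ s, 0 ≤ z x) :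
    (#s : ℝ) ^ #s * ∏ x ∈ s, z x ≤ (∑ x ∈ s, z x) ^ #s := by
  obtain rfl | hs := s.eq_empty_or_nonempty
  · simp
  have hcard : (0 : ℝ) < #s := by exact_mod_cast hs.card_pos
  have hmean : (∏ x ∈ s, z x) ^ (#s : ℝ)⁻¹ ≤ (∑ x ∈ s, z x) / #s := by
    simpa using Real.geom_mean_le_arith_mean s (fun _ ↦ 1) z (by simp) (by simpa using hs) hz
  rwa [Real.rpow_inv_le_iff_of_pos (prod_nonneg hz) (by have := sum_nonneg hz; positivity) hcard,
    Real.rpow_natCast, div_pow, le_div_iff₀' (by positivity)] at hmean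

variable {K : Type*} [Field K] [LinearOrder K] [IsStrictOrderedRing K] {a : K} {c : ι → ℕ}

lemma mul_card_div_sum_pow_card_le_prod_div (ha : 0 ≤ a) (hc : ∀ x ∈ s, 0 < c x) :
    (a * #s / (∑ x ∈ s, c x : ℕ)) ^ #s ≤ ∏ x ∈ s, a / (c x : K) := by
  have hamgm : #s ^ #s * ∏ x ∈ s, c x ≤ (∑ x ∈ s, c x) ^ #s := by
    exact_mod_cast card_pow_card_mul_prod_le_sum_pow_card s fun x _ ↦ (c x).cast_nonneg (α := ℝ)
  have hprod : 0 < ∏ x ∈ s, c x := prod_pos hc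
  have hsum : 0 < (∑ x ∈ s, c x) ^ #s := (Nat.mul_pos Nat.pow_self_pos hprod).trans_le hamgm
  rw [prod_div_distrib, prod_const, div_pow, mul_pow, ← Nat.cast_prod,
    div_le_div_iff₀ (by exact_mod_cast hsum) (by exact_mod_cast hprod), mul_assoc]
  exact mul_le_mul_of_nonneg_left (by exact_mod_cast hamgm) (pow_nonneg ha _)

lemma mul_prod_factorial_mul_addChoose_le_prod_range_add (ha : 0 ≤ a) (hc : ∀ x ∈ s, 0 < c x) :
    (a * #s / (∑ x ∈ s, c x : ℕ)) ^ #s * (∏ x ∈ s, ((c x).factorial : K)) *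
        addChoose a (∑ x ∈ s, c x - #s) ≤
      ∏ x ∈ s, ∏ j ∈ range (c x), (a + j) := by
  have hexcess : ∑ x ∈ s, c x - #s = ∑ x ∈ s, (c x - 1) := by
    rw [sum_tsub_distrib _ hc, card_eq_sum_ones]
  have hfact : (0 : K) ≤ ∏ x ∈ s, ((c x).factorial : K) := prod_nonneg fun _ _ ↦ Nat.cast_nonneg _
  have hdiv : 0 ≤ ∏ x ∈ s, a / (c x : K) := prod_nonneg fun _ _ ↦ div_nonneg ha (Nat.cast_nonneg _)
  calc (a * #s / (∑ x ∈ s, c x : ℕ)) ^ #s * (∏ x ∈ s, ((c x).factorial : K)) *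
          addChoose a (∑ x ∈ s, c x - #s)
    _ ≤ (∏ x ∈ s, a / (c x : K)) * (∏ x ∈ s, ((c x).factorial : K)) *
          ∏ x ∈ s, addChoose a (c x - 1) := by
      rw [hexcess]
      exact mul_le_mul
        (mul_le_mul_of_nonneg_right (mul_card_div_sum_pow_card_le_prod_div s ha hc) hfact)
        (addChoose_sum_le_prod ha _ _) (addChoose_nonneg ha _) (mul_nonneg hdiv hfact)
    _ = ∏ x ∈ s, a / (c x : K) * (c x).factorial * addChoose a (c x - 1) := by
      simp only [prod_mul_distrib]
    _ = ∏ x ∈ s, ∏ j ∈ range (c x), (a + j) := prod_congr rfl fun x hx ↦ by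
      obtain ⟨m, hm⟩ := Nat.exists_eq_add_one.mpr (hc x hx)
      rw [hm, prod_range_succ_add_natCast, Nat.add_sub_cancel]

end PositiveCounts

theorem stmt7_general {K α : Type*} [Field K] [LinearOrder K] [IsStrictOrderedRing K]
    [DecidableEq α] {a : K} (ha : 0 ≤ a) (n : ℕ) (xs : ℕ → α) :
    (a * #((range n).image xs) / n) ^ #((range n).image xs) *
        (∏ x ∈ (range n).image xs, ((#{i ∈ range n | xs i = x}).factorial : K)) *
        ∏ k ∈ Icc 1 (n - #((range n).image xs)), ((a + k) / (k : K)) ≤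
      ∏ k ∈ range n, (a + (#{i ∈ range k | xs i = xs k} : K)) := by
  have hpos : ∀ x ∈ (range n).image xs, 0 < #{i ∈ range n | xs i = x} := fun x hx ↦
    card_pos.mpr (fiber_nonempty_iff_mem_image.mpr hx)
  have hsum : ∑ x ∈ (range n).image xs, #{i ∈ range n | xs i = x} = n := by
    rw [← card_eq_sum_card_image, card_range]
  have hregroup := prod_range_count_eq_prod_image xs (fun j ↦ a + (j : K)) n
  simp only [Nat.count_eq_card_filter_range] at hregroup
  have hbound := mul_prod_factorial_mul_addChoose_le_prod_range_add _ ha hpos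
  rwa [hsum, ← hregroup] at hbound

/-- numerator lower bound. Let `a > 0`, let `c(1),…,c(M)` be positive
integers with sum `n`, and let `x^n` be a sequence over `{1,…,M}` (0-indexed here:
`xs i` is the `(i+1)`-st symbol) in which symbol `x` occurs exactly `c(x)` times.
With `s(x; x^k) = a + |{1 ≤ i ≤ k : x_i = x}|`, we have
`∏_{k=1}^n s(x_k; x^{k-1}) ≥ (a·M/n)^M · ∏_x c(x)! · ∏_{k=1}^{n-M} (a+k)/k`. -/
theorem stmt7 (M : ℕ) (hM : 1 ≤ M) (a : ℝ) (ha : 0 < a)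
    (cnt : Fin M → ℕ) (hpos : ∀ x, 0 < cnt x) (n : ℕ) (hsum : ∑ x, cnt x = n)
    (xs : ℕ → Fin M)
    (hocc : ∀ x, ((Finset.range n).filter (fun i => xs i = x)).card = cnt x) :
    (a * M / n) ^ M * (∏ x, ((cnt x).factorial : ℝ)) *
        ∏ k ∈ Finset.Icc 1 (n - M), ((a + k) / (k : ℝ)) ≤
      ∏ k ∈ Finset.range n,
        (a + (((Finset.range k).filter (fun i => xs i = xs k)).card : ℝ)) := by
  obtain rfl : (fun x ↦ #{i ∈ range n | xs i = x}) = cnt := funext hocc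
  have himage : (range n).image xs = univ := eq_univ_iff_forall.mpr fun x ↦ by
    simpa [card_pos, Finset.Nonempty] using hpos x
  simpa [himage] using stmt7_general ha.le n xs
end

section
/- Let a > 0 be real, let M ≥ 1, and let c(1),…,c(M) be positive integers with Σ_{x=1}^M c(x) = n. Then ∏_{x=1}^M ∏_{l=1}^{c(x)−1} (1 + a/l) ≥ ∏_{k=1}^{n−M} (k+a)/k. -/
open Finset

/-!
Splitting off the first `m` factors of a product of `m + n` antitone nonnegative factors leaves `n`
factors that only increase when their indices are shifted down to start afresh. Hence the initial
products are submultiplicative in their length, and a product of total length `∑ x, d x` is at most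
the product of its blocks of lengths `d x`, all restarted at the first index.
-/

section AntitoneFactors

variable {R : Type*} [CommSemiring R] [PartialOrder R] [IsOrderedRing R] {f : ℕ → R}

lemma prod_range_add_le_of_antitone (hf : Antitone f) (hf₀ : ∀ l, 0 ≤ f l) (m n : ℕ) :
    ∏ l ∈ range (m + n), f l ≤ (∏ l ∈ range m, f l) * ∏ l ∈ range n, f l := by
  have shift : ∏ l ∈ range n, f (m + l) ≤ ∏ l ∈ range n, f l :=
    prod_le_prod (fun _ _ ↦ hf₀ _) fun l _ ↦ hf (Nat.le_add_left l m)
  rw [prod_range_add]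
  exact mul_le_mul_of_nonneg_left shift (prod_nonneg fun _ _ ↦ hf₀ _)

lemma prod_range_sum_le_of_antitone {ι : Type*} (hf : Antitone f) (hf₀ : ∀ l, 0 ≤ f l)
    (s : Finset ι) (d : ι → ℕ) :
    ∏ l ∈ range (∑ x ∈ s, d x), f l ≤ ∏ x ∈ s, ∏ l ∈ range (d x), f l :=
  le_prod_of_submultiplicative_of_nonneg
    (fun m : Multiplicative ℕ ↦ ∏ l ∈ range m.toAdd, f l)
    (fun _ ↦ prod_nonneg fun _ _ ↦ hf₀ _) (prod_range_zero f).le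
    (fun m n ↦ prod_range_add_le_of_antitone hf hf₀ m.toAdd n.toAdd)
    s fun x ↦ Multiplicative.ofAdd (d x)

end AntitoneFactors

lemma prod_Icc_one_eq_prod_range {M : Type*} [CommMonoid M] (f : ℕ → M) (n : ℕ) :
    ∏ l ∈ Icc 1 n, f l = ∏ l ∈ range n, f (l + 1) := by
  rw [range_eq_Ico, prod_Ico_add' f 0 n 1]
  rfl

section OrderedSemifield

variable {K : Type*} [Semifield K] [LinearOrder K] [IsStrictOrderedRing K] {a : K}

lemma antitone_one_add_div_succ (ha : 0 ≤ a) :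
    Antitone fun l : ℕ ↦ 1 + a / ((l + 1 : ℕ) : K) := by
  intro k l hkl
  dsimp only
  gcongr

lemma prod_Icc_one_add_div_sum_le {ι : Type*} (ha : 0 ≤ a) (s : Finset ι) (d : ι → ℕ) :
    ∏ l ∈ Icc 1 (∑ x ∈ s, d x), (1 + a / (l : K)) ≤
      ∏ x ∈ s, ∏ l ∈ Icc 1 (d x), (1 + a / (l : K)) := by
  simp only [prod_Icc_one_eq_prod_range]
  exact prod_range_sum_le_of_antitone (antitone_one_add_div_succ ha) (fun _ ↦ by positivity) s d

theorem stmt8_general {ι : Type*} (ha : 0 ≤ a) (s : Finset ι) (c : ι → ℕ)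
    (hc : ∀ x ∈ s, 0 < c x) :
    ∏ k ∈ Icc 1 ((∑ x ∈ s, c x) - #s), ((k : K) + a) / (k : K) ≤
      ∏ x ∈ s, ∏ l ∈ Icc 1 (c x - 1), (1 + a / (l : K)) := by
  have factor_eq (k : ℕ) (hk : 1 ≤ k) : ((k : K) + a) / (k : K) = 1 + a / (k : K) :=
    (one_add_div (Nat.cast_ne_zero.2 (Nat.one_le_iff_ne_zero.1 hk))).symm
  have length_eq : (∑ x ∈ s, c x) - #s = ∑ x ∈ s, (c x - 1) := by
    rw [card_eq_sum_ones, sum_tsub_distrib s hc]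
  rw [length_eq, prod_congr rfl fun k hk ↦ factor_eq k (mem_Icc.1 hk).1]
  exact prod_Icc_one_add_div_sum_le ha s fun x ↦ c x - 1

end OrderedSemifield

/-- product rearrangement inequality. For real `a > 0` and positive
integers `c(1),…,c(M)` with sum `n`,
`∏_{x=1}^M ∏_{l=1}^{c(x)-1} (1 + a/l) ≥ ∏_{k=1}^{n-M} (k+a)/k`. -/
theorem stmt8 (M : ℕ) (hM : 1 ≤ M) (a : ℝ) (ha : 0 < a)
    (cnt : Fin M → ℕ) (hpos : ∀ x, 0 < cnt x) (n : ℕ) (hsum : ∑ x, cnt x = n) :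
    ∏ k ∈ Finset.Icc 1 (n - M), (((k : ℝ) + a) / (k : ℝ)) ≤
      ∏ x, ∏ l ∈ Finset.Icc 1 (cnt x - 1), (1 + a / (l : ℝ)) := by
  simpa only [hsum, card_fin] using stmt8_general ha.le univ cnt fun x _ ↦ hpos x
end

section
/- Consider a realization of Algorithm RFD on x^n whose rescale partition is {[1,n]}, and let t0 = Σ_{y∈X} s0(y). For any probability distribution p on X, ℓ(x^n; RFD) − ℓ(x^n; p) ≤ ((N−1)·d + t0 − 1)/d · log₂ n + log₂( (t0/d)·e^{t0/d} ) + N·log₂ d. -/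
open Finset

/-!
Before the first rescale the algorithm is additive smoothing: with `b x = s0 x / d` it predicts `x`
with probability `(b x + mₓ) / (∑ b + k)`, where `mₓ` is the number of occurrences of `x` so far.
Its likelihood of `x^n` is therefore a quotient of rising factorials, `∏ₓ (b x)_{mₓ} / (∑ b)_n`.
Up to polynomial factors these are `∏ₓ mₓ!` and `n!`, so up to such a factor the likelihood
is the inverse of the multinomial coefficient. The latter times `p (x^n)` is a single term in the
expansion of `(∑ p) ^ n`, hence is at most one.
-/

theorem sum_range_apply_count_eq {α M : Type*} [Fintype α] [DecidableEq α] [AddCommMonoid M]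
    (xs : ℕ → α) (f : α → ℕ → M) (n : ℕ) :
    ∑ k ∈ range n, f (xs k) (Nat.count (xs · = xs k) k) =
      ∑ x, ∑ j ∈ range (Nat.count (xs · = x) n), f x j := by
  induction n with
  | zero => simp
  | succ n ih =>
    have count_succ : ∀ x, ∑ j ∈ range (Nat.count (xs · = x) (n + 1)), f x j =
        ∑ j ∈ range (Nat.count (xs · = x) n), f x j +
          if xs n = x then f x (Nat.count (xs · = x) n) else 0 := by
      intro x
      by_cases h : xs n = x <;> simp [Nat.count_succ, h, sum_range_succ]
    simp only [count_succ, sum_add_distrib, sum_range_succ, ih, sum_ite_eq, mem_univ, if_true]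

theorem sum_count_eq {α : Type*} [Fintype α] [DecidableEq α] (xs : ℕ → α) (n : ℕ) :
    ∑ x, Nat.count (xs · = x) n = n := by
  simpa using (sum_range_apply_count_eq xs (fun _ _ => (1 : ℕ)) n).symm

theorem sum_Icc_one_eq_sum_range {M : Type*} [AddCommMonoid M] (f : ℕ → M) (n : ℕ) :
    ∑ k ∈ Icc 1 n, f (k - 1) = ∑ k ∈ range n, f k := by
  rw [← Ico_add_one_right_eq_Icc, sum_Ico_eq_sum_range]
  simp

-- At `m = 0` this relies on `Real.log 0 = 0`.
theorem monotone_log_natCast : Monotone fun m : ℕ => Real.log m := by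
  intro m n hmn
  rcases m.eq_zero_or_pos with rfl | hm
  · simpa using Real.log_natCast_nonneg n
  · exact Real.log_le_log (by positivity) (by exact_mod_cast hmn)

theorem log_add_le_log_add_div {a y : ℝ} (hy : 0 < y) (hay : 0 < a + y) :
    Real.log (a + y) ≤ Real.log y + a / y := by
  have h := Real.log_le_sub_one_of_pos (div_pos hay hy)
  rw [Real.log_div hay.ne' hy.ne', add_div, div_self hy.ne'] at h
  linarith

theorem sum_log_add_le_harmonic {a : ℝ} (ha : 0 < a) (m : ℕ) :
    ∑ k ∈ range (m + 1), Real.log (a + k) ≤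
      Real.log m.factorial + Real.log a + a * harmonic m := by
  induction m with
  | zero => simp
  | succ m ih =>
    have hlast : Real.log (a + (m + 1 : ℕ)) ≤ Real.log (m + 1 : ℕ) + a / (m + 1 : ℕ) :=
      log_add_le_log_add_div (by positivity) (by positivity)
    rw [sum_range_succ, harmonic_succ, Nat.factorial_succ, Nat.cast_mul,
      Real.log_mul (by positivity) (by positivity)]
    push_cast [div_eq_mul_inv] at hlast ⊢
    linarith

theorem sum_log_add_le_log_factorial_add {a : ℝ} (ha : 0 < a) {n : ℕ} (hn : n ≠ 0) :
    ∑ k ∈ range n, Real.log (a + k) ≤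
      Real.log n.factorial + (a - 1) * Real.log n + Real.log a + a := by
  obtain ⟨m, rfl⟩ := Nat.exists_eq_succ_of_ne_zero hn
  have hharmonic : (harmonic m : ℝ) ≤ 1 + Real.log (m + 1 : ℕ) :=
    (harmonic_le_one_add_log m).trans (by gcongr 1 + ?_; exact monotone_log_natCast m.le_succ)
  calc ∑ k ∈ range (m + 1), Real.log (a + k)
      ≤ Real.log m.factorial + Real.log a + a * harmonic m := sum_log_add_le_harmonic ha m
    _ ≤ Real.log m.factorial + Real.log a + a * (1 + Real.log (m + 1 : ℕ)) := by gcongr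
    _ = Real.log (m + 1).factorial + (a - 1) * Real.log (m + 1 : ℕ) + Real.log a + a := by
      rw [Nat.factorial_succ, Nat.cast_mul, Real.log_mul (by positivity) (by positivity)]
      ring

theorem log_add_mul_sub_log_le {w y : ℝ} (hw0 : 0 ≤ w) (hw1 : w ≤ 1) (hy : 0 < y) :
    Real.log y + w * (Real.log (y + 1) - Real.log y) ≤ Real.log (w + y) := by
  have h := strictConcaveOn_log_Ioi.concaveOn.2 (Set.mem_Ioi.2 hy)
    (Set.mem_Ioi.2 (by linarith : 0 < y + 1)) (sub_nonneg.2 hw1) hw0 (by ring)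
  simp only [smul_eq_mul] at h
  rw [show (1 - w) * y + w * (y + 1) = w + y by ring] at h
  linarith

theorem log_factorial_le_sum_log_add {w : ℝ} (hw0 : 0 < w) (hw1 : w ≤ 1) (m : ℕ) :
    Real.log m.factorial ≤
      ∑ j ∈ range m, Real.log (w + j) + (1 - w) * Real.log m - Real.log w := by
  induction m with
  | zero => simpa using Real.log_nonpos hw0.le hw1
  | succ m ih =>
    rcases m.eq_zero_or_pos with rfl | hm
    · simp
    · have hlast : Real.log m + w * (Real.log (m + 1) - Real.log m) ≤ Real.log (w + m) :=
        log_add_mul_sub_log_le hw0.le hw1 (by exact_mod_cast hm)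
      rw [sum_range_succ, Nat.factorial_succ, Nat.cast_mul,
        Real.log_mul (by positivity) (by positivity)]
      push_cast
      linarith

theorem multinomial_mul_prod_pow_le {α R : Type*} [CommSemiring R] [PartialOrder R]
    [IsOrderedRing R] {s : Finset α} {p : α → R} (hp : ∀ x ∈ s, 0 ≤ p x) {m : α → ℕ}
    (hm : ∀ x ∉ s, m x = 0) :
    (Nat.multinomial s m : R) * ∏ x ∈ s, p x ^ m x ≤ (∑ x ∈ s, p x) ^ ∑ x ∈ s, m x := by
  classical
  rw [sum_pow_eq_sum_piAntidiag]
  exact single_le_sum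
    (f := fun k : α → ℕ => (Nat.multinomial s k : R) * ∏ x ∈ s, p x ^ k x)
    (fun k _ => mul_nonneg (Nat.cast_nonneg _) (prod_nonneg fun x hx => pow_nonneg (hp x hx) _))
    (mem_piAntidiag.2 ⟨rfl, fun x hx => by_contra fun hxs => hx (hm x hxs)⟩)

theorem log_factorial_sum_add_sum_mul_log_le {α : Type*} [Fintype α] {p : α → ℝ}
    (hp0 : ∀ x, 0 ≤ p x) (hp1 : ∑ x, p x ≤ 1) {m : α → ℕ} (hpm : ∀ x, m x ≠ 0 → p x ≠ 0) :
    Real.log (∑ x, m x).factorial + ∑ x, m x * Real.log (p x) ≤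
      ∑ x, Real.log (m x).factorial := by
  have hpow : ∀ x ∈ univ, p x ^ m x ≠ 0 := by
    intro x _ hx
    obtain ⟨hpx, hmx⟩ := pow_eq_zero_iff'.1 hx
    exact hpm x hmx hpx
  have hfactorial : ∀ x ∈ univ, ((m x).factorial : ℝ) ≠ 0 := fun x _ => by positivity
  have hmultinomial : (Nat.multinomial univ m : ℝ) ≠ 0 := by
    exact_mod_cast (Nat.multinomial_pos univ m).ne'
  have hle : (Nat.multinomial univ m : ℝ) * ∏ x, p x ^ m x ≤ 1 :=
    (multinomial_mul_prod_pow_le (fun x _ => hp0 x) (by simp)).trans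
      (pow_le_one₀ (sum_nonneg fun x _ => hp0 x) hp1)
  have hlog : Real.log (Nat.multinomial univ m) + ∑ x, m x * Real.log (p x) ≤ 0 := by
    simpa only [Real.log_mul hmultinomial (prod_ne_zero_iff.2 hpow), Real.log_prod hpow,
      Real.log_pow] using Real.log_nonpos
        (mul_nonneg (Nat.cast_nonneg _) (prod_nonneg fun x _ => pow_nonneg (hp0 x) _)) hle
  rw [← Nat.multinomial_spec univ m, Nat.cast_mul, Nat.cast_prod,
    Real.log_mul (prod_ne_zero_iff.2 hfactorial) hmultinomial, Real.log_prod hfactorial]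
  linarith

theorem sum_log_factorial_le_sum_sum_log_add {α : Type*} [Fintype α] {w : ℝ} (hw0 : 0 < w)
    (hw1 : w ≤ 1) {b : α → ℝ} (hb : ∀ x, w ≤ b x) {m : α → ℕ} {n : ℕ} (hmn : ∀ x, m x ≤ n) :
    ∑ x, Real.log (m x).factorial ≤
      ∑ x, ∑ j ∈ range (m x), Real.log (b x + j) +
        Fintype.card α * ((1 - w) * Real.log n - Real.log w) := by
  have hletter : ∀ x, Real.log (m x).factorial ≤
      ∑ j ∈ range (m x), Real.log (b x + j) + ((1 - w) * Real.log n - Real.log w) := by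
    intro x
    have hrising : ∑ j ∈ range (m x), Real.log (w + j) ≤
        ∑ j ∈ range (m x), Real.log (b x + j) := by
      gcongr
      exact hb x
    have hlog : (1 - w) * Real.log (m x) ≤ (1 - w) * Real.log n :=
      mul_le_mul_of_nonneg_left (monotone_log_natCast (hmn x)) (sub_nonneg.2 hw1)
    linarith [log_factorial_le_sum_log_add hw0 hw1 (m x)]
  calc ∑ x, Real.log (m x).factorial
      ≤ ∑ x, (∑ j ∈ range (m x), Real.log (b x + j) + ((1 - w) * Real.log n - Real.log w)) :=
        sum_le_sum fun x _ => hletter x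
    _ = ∑ x, ∑ j ∈ range (m x), Real.log (b x + j) +
        Fintype.card α * ((1 - w) * Real.log n - Real.log w) := by
      rw [sum_add_distrib, sum_const, card_univ, nsmul_eq_mul]

section Smoothing

variable {α : Type*} [Fintype α] [DecidableEq α]

/-- The predictive probability of the letter `x` after the letters `xs 0, …, xs (k - 1)` under
additive smoothing with pseudo-counts `b`, i.e. under the Bayes mixture of memoryless sources with
Dirichlet prior of parameter `b`. -/
noncomputable def dirichletProb (b : α → ℝ) (xs : ℕ → α) (k : ℕ) (x : α) : ℝ :=
  (b x + Nat.count (xs · = x) k) / (∑ y, b y + k)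

theorem sum_log_dirichletProb {b : α → ℝ} (hb : ∀ x, 0 < b x) (xs : ℕ → α) (n : ℕ) :
    ∑ k ∈ range n, Real.log (dirichletProb b xs k (xs k)) =
      ∑ x, ∑ j ∈ range (Nat.count (xs · = x) n), Real.log (b x + j) -
        ∑ k ∈ range n, Real.log (∑ x, b x + k) := by
  have hsum : 0 < ∑ x, b x := sum_pos (fun x _ => hb x) ⟨xs 0, mem_univ _⟩
  rw [← sum_range_apply_count_eq xs (fun x j => Real.log (b x + j)), ← sum_sub_distrib]
  refine sum_congr rfl fun k _ => Real.log_div ?_ ?_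
  · have := hb (xs k)
    positivity
  · positivity

theorem log_factorial_add_sum_log_le {p : α → ℝ} (hp0 : ∀ x, 0 ≤ p x) (hp1 : ∑ x, p x ≤ 1)
    {xs : ℕ → α} {n : ℕ} (hp : ∀ k < n, p (xs k) ≠ 0) :
    Real.log n.factorial + ∑ k ∈ range n, Real.log (p (xs k)) ≤
      ∑ x, Real.log (Nat.count (xs · = x) n).factorial := by
  have hoccurs : ∀ x, Nat.count (xs · = x) n ≠ 0 → p x ≠ 0 := by
    intro x hx hpx
    refine hx (Nat.count_iff_forall_not.2 ?_)
    rintro k hk rfl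
    exact hp k hk hpx
  have hregroup : ∑ k ∈ range n, Real.log (p (xs k)) =
      ∑ x, Nat.count (xs · = x) n * Real.log (p x) := by
    simpa using sum_range_apply_count_eq xs (fun x _ => Real.log (p x)) n
  simpa only [sum_count_eq, hregroup] using log_factorial_sum_add_sum_mul_log_le hp0 hp1 hoccurs

theorem sum_log_sub_sum_log_dirichletProb_le {w : ℝ} (hw0 : 0 < w) (hw1 : w ≤ 1) {b : α → ℝ}
    (hb : ∀ x, w ≤ b x) {p : α → ℝ} (hp0 : ∀ x, 0 ≤ p x) (hp1 : ∑ x, p x ≤ 1)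
    {xs : ℕ → α} {n : ℕ} (hn : n ≠ 0) (hp : ∀ k < n, p (xs k) ≠ 0) :
    ∑ k ∈ range n, Real.log (p (xs k)) -
        ∑ k ∈ range n, Real.log (dirichletProb b xs k (xs k)) ≤
      (Fintype.card α * (1 - w) + ∑ x, b x - 1) * Real.log n +
        Real.log (∑ x, b x) + ∑ x, b x - Fintype.card α * Real.log w := by
  have hbpos : ∀ x, 0 < b x := fun x => hw0.trans_le (hb x)
  have hsum : 0 < ∑ x, b x := sum_pos (fun x _ => hbpos x) ⟨xs 0, mem_univ _⟩
  rw [sum_log_dirichletProb hbpos]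
  have hcount : ∀ x, Nat.count (xs · = x) n ≤ n := fun x => Nat.count_le _
  linarith [log_factorial_add_sum_log_le hp0 hp1 hp, sum_log_add_le_log_factorial_add hsum hn,
    sum_log_factorial_le_sum_sum_log_add hw0 hw1 hb hcount]

end Smoothing

section RFD

variable {N d T : ℕ} {cf : ℝ} {s0 : Fin N → ℕ} {xs : ℕ → Fin N}

theorem RFDupdate_of_sum_add_le {s : Fin N → ℕ} (h : ∑ i, s i + d ≤ T) (x y : Fin N) :
    RFDupdate cf d T s x y = s y + if x = y then d else 0 := by
  by_cases hxy : x = y <;> simp [RFDupdate, h.not_gt, hxy, eq_comm]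

theorem RFDcounts_eq_of_not_rescaleAt {k : ℕ} (h : ∀ j ≤ k, ¬ RFDrescaleAt cf d T s0 xs j)
    (x : Fin N) :
    RFDcounts cf d T s0 xs k x = s0 x + d * Nat.count (xs · = x) k := by
  induction k generalizing x with
  | zero => simp [RFDcounts]
  | succ k ih =>
    have hle : RFDtotal cf d T s0 xs k + d ≤ T :=
      not_lt.1 fun hlt => h (k + 1) le_rfl ⟨by omega, hlt⟩
    rw [RFDcounts, RFDupdate_of_sum_add_le hle, ih fun j hj => h j (by omega), Nat.count_succ,
      mul_add, mul_ite, mul_one, mul_zero, add_assoc]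

theorem RFDtotal_eq_of_not_rescaleAt {k : ℕ} (h : ∀ j ≤ k, ¬ RFDrescaleAt cf d T s0 xs j) :
    RFDtotal cf d T s0 xs k = ∑ x, s0 x + d * k := by
  simp only [RFDtotal, RFDcounts_eq_of_not_rescaleAt h, sum_add_distrib, ← mul_sum, sum_count_eq]

theorem RFDprob_eq_dirichletProb (hd : d ≠ 0) {k : ℕ}
    (h : ∀ j ≤ k, ¬ RFDrescaleAt cf d T s0 xs j) (x : Fin N) :
    RFDprob cf d T s0 xs k x = dirichletProb (fun y => (s0 y / d : ℝ)) xs k x := by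
  have hd' : (d : ℝ) ≠ 0 := Nat.cast_ne_zero.2 hd
  rw [RFDprob, RFDcounts_eq_of_not_rescaleAt h, RFDtotal_eq_of_not_rescaleAt h, dirichletProb,
    ← sum_div]
  push_cast
  field_simp

theorem RFDcodeLen_sub_distCodeLen (p : Fin N → ℝ) (n : ℕ) :
    RFDcodeLen cf d T s0 xs 1 n - distCodeLen p xs 1 n =
      (∑ k ∈ range n, Real.log (p (xs k)) -
        ∑ k ∈ range n, Real.log (RFDprob cf d T s0 xs k (xs k))) / Real.log 2 := by
  rw [RFDcodeLen, distCodeLen,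
    sum_Icc_one_eq_sum_range fun k => Real.logb 2 (RFDprob cf d T s0 xs k (xs k)),
    sum_Icc_one_eq_sum_range fun k => Real.logb 2 (p (xs k))]
  simp only [Real.logb, ← sum_div]
  ring

theorem sum_log_sub_sum_log_RFDprob_le (hd : 1 ≤ d) (hs0 : ∀ x, 1 ≤ s0 x) {n : ℕ} (hn : n ≠ 0)
    (h : ∀ k < n, ¬ RFDrescaleAt cf d T s0 xs k) {p : Fin N → ℝ} (hp0 : ∀ x, 0 ≤ p x)
    (hp1 : ∑ x, p x ≤ 1) (hp : ∀ k < n, p (xs k) ≠ 0) :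
    ∑ k ∈ range n, Real.log (p (xs k)) -
        ∑ k ∈ range n, Real.log (RFDprob cf d T s0 xs k (xs k)) ≤
      (N * (1 - (d : ℝ)⁻¹) + (∑ x, s0 x : ℕ) / d - 1) * Real.log n +
        Real.log ((∑ x, s0 x : ℕ) / d) + (∑ x, s0 x : ℕ) / d + N * Real.log d := by
  have hprob : ∀ k ∈ range n, Real.log (RFDprob cf d T s0 xs k (xs k)) =
      Real.log (dirichletProb (fun y => (s0 y / d : ℝ)) xs k (xs k)) := fun k hk => by
    rw [RFDprob_eq_dirichletProb (by omega) fun j hj => h j (hj.trans_lt (mem_range.1 hk))]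
  have hpseudo : ∀ x, (d : ℝ)⁻¹ ≤ s0 x / d := fun x => by
    rw [inv_eq_one_div]
    gcongr
    exact_mod_cast hs0 x
  have hredundancy := sum_log_sub_sum_log_dirichletProb_le (inv_pos.2 (by exact_mod_cast hd))
    (inv_le_one_of_one_le₀ (by exact_mod_cast hd)) hpseudo hp0 hp1 hn hp
  simpa only [sum_congr rfl hprob, ← sum_div, ← Nat.cast_sum, Fintype.card_fin, Real.log_inv,
    mul_neg, sub_neg_eq_add] using hredundancy

end RFD

theorem stmt10_general (N d T : ℕ) (cf : ℝ) (s0 : Fin N → ℕ) (xs : ℕ → Fin N)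
    (hd : 1 ≤ d) (hs0 : ∀ x, 1 ≤ s0 x) (n : ℕ) (hn : 1 ≤ n)
    (hnores : ∀ k, 1 ≤ k → k < n → ¬ RFDrescaleAt cf d T s0 xs k)
    (t0 : ℕ) (ht0 : t0 = ∑ y, s0 y)
    (p : Fin N → ℝ) (hp0 : ∀ x, 0 ≤ p x) (hp1 : ∑ x, p x ≤ 1) :
    (∃ k ∈ Finset.Icc 1 n, p (xs (k - 1)) = 0) ∨
      RFDcodeLen cf d T s0 xs 1 n - distCodeLen p xs 1 n ≤
        ((((N : ℝ) - 1) * d + (t0 : ℝ) - N) / d) * Real.logb 2 n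
        + Real.logb 2 ((t0 : ℝ) / d * Real.exp ((t0 : ℝ) / d))
        + (N : ℝ) * Real.logb 2 d := by
  refine or_iff_not_imp_left.2 fun hzero => ?_
  have hp : ∀ k < n, p (xs k) ≠ 0 := fun k hk h =>
    hzero ⟨k + 1, mem_Icc.2 ⟨by omega, by omega⟩, h⟩
  have ht0pos : (0 : ℝ) < t0 := by
    exact_mod_cast ht0 ▸ sum_pos (fun x _ => hs0 x) ⟨xs 0, mem_univ _⟩
  have hredundancy := sum_log_sub_sum_log_RFDprob_le hd hs0 (by omega)
    (fun k hk hres => hnores k hres.1 hk hres) hp0 hp1 hp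
  rw [← ht0] at hredundancy
  rw [RFDcodeLen_sub_distCodeLen]
  refine (div_le_div_of_nonneg_right hredundancy (Real.log_nonneg one_le_two)).trans_eq ?_
  simp only [Real.logb]
  rw [Real.log_mul (by positivity) (by positivity), Real.log_exp]
  field_simp
  ring

/-- Proposition 6: for a realization of Algorithm RFD whose rescale
partition is `{[1,n]}` (no rescale in steps `1,…,n-1`), `t0 = Σ_y s0(y)`, and any
probability distribution `p` on `X`:
`ℓ(x^n; RFD) - ℓ(x^n; p) ≤ ((N-1)·d + t0 - 1)/d · log₂ n + log₂((t0/d)·e^(t0/d)) + N·log₂ d`.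
If `p` assigns probability `0` to some occurring letter, then `ℓ(x^n; p) = +∞` and the
claim holds trivially (first disjunct). -/
theorem stmt10 (N d T : ℕ) (cf : ℝ) (hN : 1 < N)
    (s0 : Fin N → ℕ) (xs : ℕ → Fin N)
    (hd : 1 ≤ d) (hc0 : 0 ≤ cf) (hc1 : cf < 1)
    (hT : (d : ℝ) ≤ (1 - cf) * ((T : ℝ) - N))
    (hs0 : ∀ x, 1 ≤ s0 x) (hsum : ∑ x, s0 x ≤ T)
    (n : ℕ) (hn : 1 ≤ n)
    (hnores : ∀ k, 1 ≤ k → k < n → ¬ RFDrescaleAt cf d T s0 xs k)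
    (t0 : ℕ) (ht0 : t0 = ∑ y, s0 y)
    (p : Fin N → ℝ) (hp0 : ∀ x, 0 ≤ p x) (hp1 : ∑ x, p x = 1) :
    (∃ k ∈ Finset.Icc 1 n, p (xs (k - 1)) = 0) ∨
      RFDcodeLen cf d T s0 xs 1 n - distCodeLen p xs 1 n ≤
        ((((N : ℝ) - 1) * d + (t0 : ℝ) - 1) / d) * Real.logb 2 n
        + Real.logb 2 ((t0 : ℝ) / d * Real.exp ((t0 : ℝ) / d))
        + (N : ℝ) * Real.logb 2 d := by
  refine (stmt10_general N d T cf s0 xs hd hs0 n hn hnores t0 ht0 p hp0 hp1.le).imp_right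
    fun h => h.trans ?_
  gcongr
  exacts [Real.logb_nonneg one_lt_two (mod_cast hn), mod_cast hN.le]
end

section
/- Let LP be the Laplace estimator on alphabet X = {1,…,N}, i.e., LP(x; x^k) = (|{1 ≤ i ≤ k : x_i = x}| + 1)/(k + N). Then for any sequence x^n over X and any probability distribution p on X, ℓ(x^n; LP) − ℓ(x^n; p) ≤ 2(N−1)·log₂ n + log₂(N·e^N). -/
open Finset

/-- Probability the Laplace estimator on alphabet `{1,…,N}` assigns to symbol `x` after
the (0-indexed) prefix `xs 0, …, xs (k-1)`:
`LP(x; x^k) = (|{1 ≤ i ≤ k : x_i = x}| + 1)/(k + N)`. -/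
noncomputable def laplaceProb (N : ℕ) (xs : ℕ → Fin N) (k : ℕ) (x : Fin N) : ℝ :=
  ((((Finset.range k).filter (fun i => xs i = x)).card : ℝ) + 1) / ((k : ℝ) + N)

/-! The probability the Laplace estimator assigns to a sequence is that of choosing its type (the
vector of symbol counts) uniformly among all types and then the sequence uniformly among those of
that type. A fixed distribution `p` is constant on each type, so it cannot exceed the second factor;
hence the redundancy is at most the logarithm of the number of types. That number is at most
`(n + 1)^(N - 1) ≤ n^(N - 1) * 2^(N - 1)`, and `2^(N - 1)` is absorbed by `N * e^N`. -/

/-- The code length `ℓ(x^n; M)` in bits, where `M k` is the distribution the model predicts for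
`xs k` from the prefix `xs 0, …, xs (k-1)`. A fixed distribution `p` is the model `fun _ => p`.
Since `Real.logb 2 0 = 0`, a symbol of probability zero contributes `0` rather than `+∞`. -/
noncomputable def codeLength {α : Type*} (M : ℕ → α → ℝ) (xs : ℕ → α) (n : ℕ) : ℝ :=
  -∑ i ∈ range n, Real.logb 2 (M i (xs i))

lemma codeLength_eq_neg_sum_Icc {α : Type*} (M : ℕ → α → ℝ) (xs : ℕ → α) (n : ℕ) :
    codeLength M xs n = -∑ k ∈ Icc 1 n, Real.logb 2 (M (k - 1) (xs (k - 1))) := by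
  rw [← Ico_add_one_right_eq_Icc, sum_Ico_eq_sum_range]
  simp only [add_tsub_cancel_right, add_tsub_cancel_left, codeLength]

lemma codeLength_eq_neg_logb_prod {α : Type*} {M : ℕ → α → ℝ} {xs : ℕ → α} {n : ℕ}
    (hM : ∀ i ∈ range n, M i (xs i) ≠ 0) :
    codeLength M xs n = -Real.logb 2 (∏ i ∈ range n, M i (xs i)) := by
  rw [codeLength, Real.logb_prod _ _ hM]

/-- The number of occurrences of `x` among `xs 0, …, xs (n-1)`; the function `prefixCount xs n` is
the type (empirical histogram) of the prefix of length `n`. -/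
def prefixCount {α : Type*} [DecidableEq α] (xs : ℕ → α) (n : ℕ) (x : α) : ℕ :=
  #{i ∈ range n | xs i = x}

section PrefixCount

variable {α : Type*} [DecidableEq α] (xs : ℕ → α) (n : ℕ)

lemma prefixCount_succ (x : α) :
    prefixCount xs (n + 1) x = prefixCount xs n x + if xs n = x then 1 else 0 := by
  rw [prefixCount, prefixCount, range_add_one, filter_insert]
  split_ifs <;> simp

lemma sum_prefixCount [Fintype α] : ∑ x, prefixCount xs n x = n := by
  simp only [prefixCount, ← card_eq_sum_card_fiberwise fun i _ => mem_univ (xs i), card_range]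

lemma prod_pow_prefixCount {R : Type*} [Fintype α] [CommMonoid R] (p : α → R) :
    ∏ x, p x ^ prefixCount xs n x = ∏ i ∈ range n, p (xs i) := by
  simp only [prefixCount, ← prod_const, prod_fiberwise']

lemma prod_factorial_prefixCount_succ [Fintype α] :
    ∏ x, (prefixCount xs (n + 1) x).factorial =
      (∏ x, (prefixCount xs n x).factorial) * (prefixCount xs n (xs n) + 1) := by
  have factorial_step (x : α) : (prefixCount xs (n + 1) x).factorial =
      (prefixCount xs n x).factorial * if xs n = x then prefixCount xs n x + 1 else 1 := by
    rw [prefixCount_succ]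
    split_ifs
    · rw [Nat.factorial_succ, mul_comm]
    · rw [add_zero, mul_one]
  simp only [factorial_step, prod_mul_distrib, prod_ite_eq, mem_univ, if_true]

end PrefixCount

lemma multinomial_mul_prod_pow_le_sum_pow {α R : Type*} [CommSemiring R] [PartialOrder R]
    [IsOrderedRing R] (s : Finset α) (c : α → ℕ) {p : α → R} (hp : ∀ x ∈ s, 0 ≤ p x) :
    (Nat.multinomial s c : R) * ∏ x ∈ s, p x ^ c x ≤ (∑ x ∈ s, p x) ^ ∑ x ∈ s, c x := by
  classical
  let term (k : α → ℕ) : R := Nat.multinomial s k * ∏ x ∈ s, p x ^ k x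
  let c' (x : α) : ℕ := if x ∈ s then c x else 0
  have hc' : ∀ x ∈ s, c' x = c x := fun x hx => if_pos hx
  have hmem : c' ∈ s.piAntidiag (∑ x ∈ s, c x) :=
    mem_piAntidiag.2 ⟨sum_congr rfl hc', fun x hx => by_contra fun hxs => hx (if_neg hxs)⟩
  calc (Nat.multinomial s c : R) * ∏ x ∈ s, p x ^ c x
      = term c' := by
        rw [← Nat.multinomial_congr hc', prod_congr rfl fun x hx => by rw [← hc' x hx]]
    _ ≤ ∑ k ∈ s.piAntidiag (∑ x ∈ s, c x), term k :=
        single_le_sum (f := term) (fun k _ => mul_nonneg (Nat.cast_nonneg _)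
          (prod_nonneg fun x hx => pow_nonneg (hp x hx) _)) hmem
    _ = (∑ x ∈ s, p x) ^ ∑ x ∈ s, c x := (sum_pow_eq_sum_piAntidiag s p _).symm

section Laplace

variable {N : ℕ} (xs : ℕ → Fin N) (n : ℕ)

lemma laplaceProb_pos (x : Fin N) : 0 < laplaceProb N xs n x := by
  have hN : 0 < N := x.pos
  unfold laplaceProb
  positivity

lemma ascFactorial_mul_prod_laplaceProb :
    (N.ascFactorial n : ℝ) * ∏ i ∈ range n, laplaceProb N xs i (xs i) =
      ∏ x, ((prefixCount xs n x).factorial : ℝ) := by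
  induction n with
  | zero => simp [prefixCount]
  | succ n ih =>
    have hN : 0 < N := (xs 0).pos
    have laplace_step : laplaceProb N xs n (xs n) * (N + n) = prefixCount xs n (xs n) + 1 := by
      rw [laplaceProb, add_comm (N : ℝ), div_mul_cancel₀ _ (by positivity), prefixCount]
    have factorial_step := congrArg (Nat.cast (R := ℝ)) (prod_factorial_prefixCount_succ xs n)
    push_cast at factorial_step
    rw [factorial_step, ← ih, ← laplace_step, prod_range_succ, Nat.ascFactorial_succ]
    push_cast
    ring

lemma multichoose_mul_multinomial_mul_prod_laplaceProb :
    (N.multichoose n : ℝ) * Nat.multinomial univ (prefixCount xs n) *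
      ∏ i ∈ range n, laplaceProb N xs i (xs i) = 1 := by
  have hasc : (N.ascFactorial n : ℝ) = n.factorial * N.multichoose n := by
    rw [Nat.ascFactorial_eq_factorial_mul_choose', ← Nat.multichoose_eq, Nat.cast_mul]
  have hmult : (∏ x, ((prefixCount xs n x).factorial : ℝ)) *
      Nat.multinomial univ (prefixCount xs n) = n.factorial := by
    have hspec := Nat.multinomial_spec univ (prefixCount xs n)
    rw [sum_prefixCount] at hspec
    exact_mod_cast hspec
  refine mul_left_cancel₀ (Nat.cast_ne_zero.2 n.factorial_ne_zero : (n.factorial : ℝ) ≠ 0) ?_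
  calc (n.factorial : ℝ) * (N.multichoose n * Nat.multinomial univ (prefixCount xs n) *
        ∏ i ∈ range n, laplaceProb N xs i (xs i))
      = (N.ascFactorial n * ∏ i ∈ range n, laplaceProb N xs i (xs i)) *
          Nat.multinomial univ (prefixCount xs n) := by rw [hasc]; ring
    _ = n.factorial * 1 := by rw [ascFactorial_mul_prod_laplaceProb, hmult, mul_one]

lemma prod_le_sum_pow_mul_multichoose_mul_prod_laplaceProb {p : Fin N → ℝ} (hp0 : ∀ x, 0 ≤ p x) :
    ∏ i ∈ range n, p (xs i) ≤
      (∑ x, p x) ^ n * (N.multichoose n * ∏ i ∈ range n, laplaceProb N xs i (xs i)) := by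
  have hmult := multinomial_mul_prod_pow_le_sum_pow univ (prefixCount xs n) fun x _ => hp0 x
  rw [prod_pow_prefixCount, sum_prefixCount] at hmult
  have hlap : 0 ≤ ∏ i ∈ range n, laplaceProb N xs i (xs i) :=
    prod_nonneg fun i _ => (laplaceProb_pos xs i _).le
  calc ∏ i ∈ range n, p (xs i)
      = (Nat.multinomial univ (prefixCount xs n) * ∏ i ∈ range n, p (xs i)) *
          (N.multichoose n * ∏ i ∈ range n, laplaceProb N xs i (xs i)) := by
        linear_combination (-∏ i ∈ range n, p (xs i)) *
          multichoose_mul_multinomial_mul_prod_laplaceProb xs n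
    _ ≤ _ := by gcongr

end Laplace

lemma codeLength_laplaceProb_sub_codeLength_le {N n : ℕ} {xs : ℕ → Fin N} {p : Fin N → ℝ}
    (hp0 : ∀ x, 0 ≤ p x) (hp1 : ∑ x, p x = 1) (hne : ∀ i ∈ range n, p (xs i) ≠ 0) :
    codeLength (laplaceProb N xs) xs n - codeLength (fun _ => p) xs n ≤
      Real.logb 2 (N.multichoose n) := by
  have hlap (i : ℕ) : laplaceProb N xs i (xs i) ≠ 0 := (laplaceProb_pos xs i _).ne'
  have hprod : 0 < ∏ i ∈ range n, p (xs i) := prod_pos fun i hi => (hp0 _).lt_of_ne' (hne i hi)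
  have hle := prod_le_sum_pow_mul_multichoose_mul_prod_laplaceProb xs n hp0
  rw [hp1, one_pow, one_mul] at hle
  have hlog := Real.logb_le_logb_of_le one_lt_two hprod hle
  have hmultichoose : (N.multichoose n : ℝ) ≠ 0 := left_ne_zero_of_mul (hprod.trans_le hle).ne'
  rw [Real.logb_mul hmultichoose (prod_ne_zero_iff.2 fun i _ => hlap i)] at hlog
  rw [codeLength_eq_neg_logb_prod fun i _ => hlap i, codeLength_eq_neg_logb_prod hne]
  linarith

lemma multichoose_succ_le_pow : ∀ N n : ℕ, (N + 1).multichoose n ≤ (n + 1) ^ N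
  | 0, n => by simp
  | N + 1, 0 => by simp
  | N + 1, n + 1 => calc
      (N + 2).multichoose (n + 1) = (N + 1).multichoose (n + 1) + (N + 2).multichoose n :=
        Nat.multichoose_succ_succ _ _
      _ ≤ (n + 2) ^ N + (n + 1) ^ (N + 1) :=
        add_le_add (multichoose_succ_le_pow N (n + 1)) (multichoose_succ_le_pow (N + 1) n)
      _ ≤ (n + 2) ^ N + (n + 2) ^ N * (n + 1) := by
        rw [pow_succ]
        gcongr
        omega
      _ = (n + 2) ^ (N + 1) := by ring

lemma sub_one_le_logb_mul_exp {x : ℝ} (hx : 1 ≤ x) : x - 1 ≤ Real.logb 2 (x * Real.exp x) := by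
  have hlog : 0 < Real.log 2 := Real.log_pos one_lt_two
  rw [Real.logb, Real.log_mul (by positivity) (Real.exp_ne_zero x), Real.log_exp, le_div_iff₀ hlog]
  calc (x - 1) * Real.log 2 ≤ (x - 1) * 1 :=
        mul_le_mul_of_nonneg_left (Real.log_two_lt_d9.le.trans (by norm_num)) (sub_nonneg.2 hx)
    _ ≤ Real.log x + x := by linarith [Real.log_nonneg hx]

lemma logb_multichoose_le {N n : ℕ} (hN : 1 ≤ N) (hn : 1 ≤ n) :
    Real.logb 2 (N.multichoose n) ≤
      2 * ((N : ℝ) - 1) * Real.logb 2 n + Real.logb 2 ((N : ℝ) * Real.exp N) := by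
  obtain ⟨M, rfl⟩ := Nat.exists_eq_add_of_le' hN
  have hn' : (1 : ℝ) ≤ n := mod_cast hn
  have hpos : 0 < (M + 1).multichoose n := by
    rw [Nat.multichoose_eq]
    exact Nat.choose_pos (by omega)
  have hpow : ((M + 1).multichoose n : ℝ) ≤ (2 * n) ^ M :=
    calc ((M + 1).multichoose n : ℝ) ≤ (n + 1) ^ M := mod_cast multichoose_succ_le_pow M n
      _ ≤ (2 * n) ^ M := by gcongr; linarith
  have hlog_n : 0 ≤ Real.logb 2 n := Real.logb_nonneg one_lt_two hn'
  have hM : (M : ℝ) ≤ Real.logb 2 ((M + 1 : ℕ) * Real.exp (M + 1 : ℕ)) := by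
    simpa using sub_one_le_logb_mul_exp (x := (M + 1 : ℕ)) (by simp)
  calc Real.logb 2 ((M + 1).multichoose n)
      ≤ Real.logb 2 ((2 * n) ^ M) :=
        Real.logb_le_logb_of_le one_lt_two (Nat.cast_pos.2 hpos) hpow
    _ = M * Real.logb 2 n + M := by
        rw [Real.logb_pow, Real.logb_mul two_ne_zero (by positivity),
          Real.logb_self_eq_one one_lt_two]
        ring
    _ ≤ 2 * M * Real.logb 2 n + Real.logb 2 ((M + 1 : ℕ) * Real.exp (M + 1 : ℕ)) := by
        linarith [mul_nonneg M.cast_nonneg hlog_n]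
    _ = _ := by rw [Nat.cast_add_one, add_sub_cancel_right]

/-- for the Laplace estimator `LP` on `X = {1,…,N}`, any sequence `x^n`
over `X` and any probability distribution `p` on `X`,
`ℓ(x^n; LP) - ℓ(x^n; p) ≤ 2(N-1)·log₂ n + log₂(N·e^N)`.
If `p` assigns probability `0` to some occurring letter, then `ℓ(x^n; p) = +∞` and the
claim holds trivially (first disjunct). -/
theorem stmt11 (N : ℕ) (hN : 1 < N) (n : ℕ) (hn : 1 ≤ n) (xs : ℕ → Fin N)
    (p : Fin N → ℝ) (hp0 : ∀ x, 0 ≤ p x) (hp1 : ∑ x, p x = 1) :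
    (∃ k ∈ Finset.Icc 1 n, p (xs (k - 1)) = 0) ∨
      (-∑ k ∈ Finset.Icc 1 n, Real.logb 2 (laplaceProb N xs (k - 1) (xs (k - 1))))
        - (-∑ k ∈ Finset.Icc 1 n, Real.logb 2 (p (xs (k - 1))))
      ≤ 2 * ((N : ℝ) - 1) * Real.logb 2 n + Real.logb 2 ((N : ℝ) * Real.exp N) := by
  rw [← codeLength_eq_neg_sum_Icc (laplaceProb N xs), ← codeLength_eq_neg_sum_Icc fun _ => p]
  refine or_iff_not_imp_left.2 fun hzero => ?_
  push Not at hzero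
  have hne : ∀ i ∈ range n, p (xs i) ≠ 0 := fun i hi =>
    hzero (i + 1) (mem_Icc.2 ⟨i.succ_pos, mem_range.1 hi⟩)
  exact (codeLength_laplaceProb_sub_codeLength_le hp0 hp1 hne).trans (logb_multichoose_le hN.le hn)
end
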